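/- Let G be a finite connected simple graph with twin classes C_1, …, C_k, representatives c_i ∈ C_i, and reduced graph H. Let S be a set of m vertices of G which meets at least two twin classes, i.e., l := |I(S)| > 1 where I(S) = {i : S ∩ C_i ≠ ∅}. Then the Steiner distance of S in G equals d_H(S_r) + Σ_{i ∈ I(S)} (t_i − 1), where S_r = {c_i : i ∈ I(S)}, t_i = |S ∩ C_i|, and d_H(S_r) is the Steiner distance of S_r in H. -/

import Mathlib

open SimpleGraph

/-- Two vertices `u` and `v` of a simple graph are *twins* if
`N(u) \ {v} = N(v) \ {u}`, where `N` denotes the open neighborhood. -/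
def IsTwin {V : Type*} (G : SimpleGraph V) (u v : V) : Prop :=
  G.neighborSet u \ {v} = G.neighborSet v \ {u}

/-- The *Steiner distance* of a set `S` of vertices of `G`: the minimum number of edges
of a connected subgraph of `G` containing all vertices of `S`. -/
noncomputable def steinerDist {V : Type*} (G : SimpleGraph V) (S : Set V) : ℕ :=
  sInf {n | ∃ T : G.Subgraph, T.Connected ∧ S ⊆ T.verts ∧ T.edgeSet.ncard = n}

/-!
A tree has one vertex more than edges, so `steinerDist G S + 1` is the least size of a vertex set
which contains `S` and induces a connected graph. Twin classes are modules: adjacency between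
distinct classes depends only on the classes. Hence, among the vertex sets meeting at least two
classes, inducing a connected graph depends only on which classes are met. So a connected set
around `S` can be thinned out to one representative per class, losing at least `|S| - |I(S)|`
vertices, and a connected set around the representatives of the classes in `I(S)` can be enlarged,
by trading these representatives for `S`, with a gain of at most `|S| - |I(S)|` vertices.
-/

section Steiner

variable {V : Type*} {G : SimpleGraph V} {S W : Set V}

/-- `W` *connects* `S` in `G` if `W` contains `S` and induces a connected subgraph. Minimizing the
size of `W` computes the Steiner distance of `S` without reference to edges. -/
structure IsConnector (G : SimpleGraph V) (S W : Set V) : Prop where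
  subset : S ⊆ W
  connected : (G.induce W).Connected

theorem ncard_edgeSet_coe (T : G.Subgraph) : T.coe.edgeSet.ncard = T.edgeSet.ncard := by
  rw [← T.image_coe_edgeSet_coe]
  exact (Set.ncard_image_of_injective _ (Sym2.map.injective Subtype.val_injective)).symm

theorem ncard_verts_le_ncard_edgeSet_add_one {T : G.Subgraph} (hT : T.Connected) :
    T.verts.ncard ≤ T.edgeSet.ncard + 1 := by
  rw [← ncard_edgeSet_coe]
  exact hT.coe.card_vert_le_card_edgeSet_add_one

theorem exists_spanning_tree_ncard_edgeSet_add_one {T : G.Subgraph} (hT : T.Connected)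
    (hfin : T.verts.Finite) :
    ∃ T' : G.Subgraph, T'.Connected ∧ T'.verts = T.verts ∧
      T'.edgeSet.ncard + 1 = T.verts.ncard := by
  have := hfin.to_subtype
  obtain ⟨F, hF, hFtree⟩ := hT.coe.exists_isTree_le
  refine ⟨_, (hFtree.connected.toSubgraph hF).coeSubgraph, by simp, ?_⟩
  rw [← Nat.card_coe_set_eq T.verts, ← (isTree_iff_connected_and_card.mp hFtree).2,
    Subgraph.edgeSet_map,
    Set.ncard_image_of_injective _ (Sym2.map.injective Subgraph.hom_injective)]
  rfl

theorem IsConnector.steinerDist_lt_ncard (hW : IsConnector G S W) (hfin : W.Finite) :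
    steinerDist G S < W.ncard := by
  obtain ⟨T, hT, hTW, hcard⟩ :=
    exists_spanning_tree_ncard_edgeSet_add_one (connected_induce_iff.mp hW.connected) hfin
  have hle : steinerDist G S ≤ T.edgeSet.ncard :=
    Nat.sInf_le ⟨T, hT, hW.subset.trans hTW.ge, rfl⟩
  rw [Subgraph.induce_verts] at hcard
  lia

theorem IsConnector.exists_ncard_le (hW : IsConnector G S W) :
    ∃ U, IsConnector G S U ∧ U.ncard ≤ steinerDist G S + 1 := by
  obtain ⟨T, hT, hS, hcard⟩ :
      steinerDist G S ∈ {n | ∃ T : G.Subgraph, T.Connected ∧ S ⊆ T.verts ∧ T.edgeSet.ncard = n} :=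
    Nat.sInf_mem ⟨_, _, connected_induce_iff.mp hW.connected, hW.subset, rfl⟩
  exact ⟨T.verts, ⟨hS, hT.induce_verts⟩, hcard ▸ ncard_verts_le_ncard_edgeSet_add_one hT⟩

theorem isConnector_induce_iff {A R : Set V} (hR : R ⊆ A) {W : Set A} :
    IsConnector (G.induce A) (Subtype.val ⁻¹' R) W ↔ IsConnector G R (Subtype.val '' W) := by
  have e : (G.induce A).induce W ≃g G.induce (Subtype.val '' W) :=
    ⟨Equiv.Set.image _ W Subtype.val_injective, Iff.rfl⟩
  have hsub : Subtype.val ⁻¹' R ⊆ W ↔ R ⊆ Subtype.val '' W := by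
    rw [← Set.image_subset_image_iff Subtype.val_injective, Subtype.image_preimage_coe,
      Set.inter_eq_right.mpr hR]
  exact ⟨fun h => ⟨hsub.mp h.subset, e.connected_iff.mp h.connected⟩,
    fun h => ⟨hsub.mpr h.subset, e.connected_iff.mpr h.connected⟩⟩

theorem IsConnector.steinerDist_induce_lt_ncard {A : Set V} (hW : IsConnector G S W) (hWA : W ⊆ A)
    (hfin : W.Finite) : steinerDist (G.induce A) (Subtype.val ⁻¹' S) < W.ncard := by
  lift W to Set A using hWA
  rw [Set.ncard_image_of_injective _ Subtype.val_injective]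
  exact ((isConnector_induce_iff (hW.subset.trans (Subtype.coe_image_subset A W))).mpr hW)
    |>.steinerDist_lt_ncard (hfin.of_finite_image Subtype.val_injective.injOn)

theorem IsConnector.exists_ncard_le_steinerDist_induce {A : Set V} (hW : IsConnector G S W)
    (hWA : W ⊆ A) :
    ∃ U, IsConnector G S U ∧
      U.ncard ≤ steinerDist (G.induce A) (Subtype.val ⁻¹' S) + 1 := by
  have hSA : S ⊆ A := hW.subset.trans hWA
  lift W to Set A using hWA
  obtain ⟨U, hU, hcard⟩ := ((isConnector_induce_iff hSA).mpr hW).exists_ncard_le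
  refine ⟨Subtype.val '' U, (isConnector_induce_iff hSA).mp hU, ?_⟩
  rwa [Set.ncard_image_of_injective _ Subtype.val_injective]

theorem exists_isConnector_of_pairwise_reachable (hS : S.Nonempty)
    (hreach : S.Pairwise G.Reachable) : ∃ W, IsConnector G S W := by
  obtain ⟨s, hs⟩ := hS
  have : Std.Refl G.Reachable := ⟨Reachable.refl⟩
  exact ⟨(G.connectedComponentMk s).supp,
    fun v hv => ConnectedComponent.sound (hreach.of_refl hv hs),
    ConnectedComponent.connected_toSimpleGraph _⟩

end Steiner

section Counting

theorem ncard_image_add_ncard_le {α β : Type*} {f : α → β} {s t : Set α} (hst : s ⊆ t)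
    (ht : t.Finite) : (f '' t).ncard + s.ncard ≤ t.ncard + (f '' s).ncard := by
  have hunion : f '' s ∪ f '' (t \ s) = f '' t := by
    rw [← Set.image_union, Set.union_sdiff_cancel hst]
  calc (f '' t).ncard + s.ncard
      ≤ (f '' s).ncard + (f '' (t \ s)).ncard + s.ncard := by
        rw [← hunion]; gcongr; exact Set.ncard_union_le _ _
    _ ≤ (f '' s).ncard + (t \ s).ncard + s.ncard := by
        gcongr; exact Set.ncard_image_le ht.sdiff
    _ = t.ncard + (f '' s).ncard := by
        rw [add_assoc, Set.ncard_sdiff_add_ncard_of_subset hst ht, add_comm]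

variable {V ι : Type*} {C : ι → Finset V} (hcover : ∀ v, ∃ i, v ∈ C i)
  (hdisj : ∀ i j, i ≠ j → Disjoint (C i) (C j))
include hcover hdisj

theorem exists_label_forall_mem_iff : ∃ p : V → ι, ∀ v i, v ∈ C i ↔ p v = i := by
  choose p hp using hcover
  refine ⟨p, fun v i => ⟨fun hv => ?_, fun h => h ▸ hp v⟩⟩
  by_contra hne
  exact Finset.disjoint_left.mp (hdisj _ _ hne) (hp v) hv

theorem sum_card_inter_sub_one_add_card [DecidableEq V] [Fintype ι] (S : Finset V) :
    ∑ i with (S ∩ C i).Nonempty, ((S ∩ C i).card - 1) +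
      (Finset.univ.filter fun i => (S ∩ C i).Nonempty).card = S.card := by
  have hS : Finset.univ.biUnion (fun i => S ∩ C i) = S := by
    ext v; simp [hcover v]
  calc ∑ i with (S ∩ C i).Nonempty, ((S ∩ C i).card - 1) +
        (Finset.univ.filter fun i => (S ∩ C i).Nonempty).card
      = ∑ i with (S ∩ C i).Nonempty, (S ∩ C i).card := by
        rw [Finset.card_eq_sum_ones, ← Finset.sum_add_distrib]
        exact Finset.sum_congr rfl fun i hi =>
          Nat.sub_add_cancel (Finset.mem_filter.mp hi).2.card_pos
    _ = ∑ i, (S ∩ C i).card :=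
        Finset.sum_filter_of_ne fun i _ h => Finset.card_ne_zero.mp h
    _ = S.card := by
        rw [← Finset.card_biUnion fun i _ j _ hij =>
          (hdisj i j hij).mono Finset.inter_subset_right Finset.inter_subset_right, hS]

end Counting

section Module

variable {V ι : Type*} {G : SimpleGraph V}

/-- `M` is a *module* (or homogeneous set) of `G`: a vertex outside `M` is adjacent either to all
vertices of `M` or to none. Twin classes are modules. -/
def IsModule (G : SimpleGraph V) (M : Set V) : Prop :=
  ∀ ⦃u⦄, u ∈ M → ∀ ⦃v⦄, v ∈ M → ∀ ⦃w⦄, w ∉ M → (G.Adj u w ↔ G.Adj v w)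

theorem IsTwin.adj_iff {u v w : V} (h : IsTwin G u v) (hu : w ≠ u) (hv : w ≠ v) :
    G.Adj u w ↔ G.Adj v w := by
  simpa [hu, hv] using Set.ext_iff.mp h w

theorem isModule_setOf_isTwin (G : SimpleGraph V) (u : V) : IsModule G {v | IsTwin G u v} := by
  have adj_iff {v w : V} (hv : IsTwin G u v) (hw : ¬IsTwin G u w) : G.Adj u w ↔ G.Adj v w :=
    hv.adj_iff (fun h => hw (h ▸ rfl)) (fun h => hw (h ▸ hv))
  exact fun v hv v' hv' w hw => (adj_iff hv hw).symm.trans (adj_iff hv' hw)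

variable {p : V → ι} (hp : ∀ i, IsModule G (p ⁻¹' {i}))
include hp

theorem adj_iff_of_isModule_fiber {u u' v v' : V} (hu : p u = p u') (hv : p v = p v')
    (hne : p u ≠ p v) : G.Adj u v ↔ G.Adj u' v' := by
  have huv : G.Adj u v ↔ G.Adj u' v := hp (p u) rfl hu.symm hne.symm
  have hvu : G.Adj v u' ↔ G.Adj v' u' := hp (p v) rfl hv.symm (fun h => hne (hu.trans h))
  rw [huv, G.adj_comm, hvu, G.adj_comm]

theorem reachable_induce_of_label_eq {U W : Set V} (hW : (G.induce W).Preconnected)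
    (hnt : (p '' W).Nontrivial) (hWU : p '' W = p '' U) {x y : U} (hxy : p x = p y) :
    (G.induce U).Reachable x y := by
  obtain ⟨a, ha, hax⟩ : p x ∈ p '' W := hWU ▸ Set.mem_image_of_mem p x.2
  obtain ⟨_, ⟨b, hb, rfl⟩, hbx⟩ := hnt.exists_ne (p x)
  obtain ⟨w⟩ := hW ⟨a, ha⟩ ⟨b, hb⟩
  obtain ⟨d, -, hfst, hsnd⟩ := w.exists_boundary_dart {v | p v = p x} hax hbx
  obtain ⟨z, hz, hzd⟩ : p d.snd ∈ p '' U := hWU ▸ Set.mem_image_of_mem p d.snd.2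
  have adj_z {t : U} (ht : p t = p x) : (G.induce U).Adj t ⟨z, hz⟩ :=
    (adj_iff_of_isModule_fiber hp (hfst.trans ht.symm) hzd.symm
      (fun h => hsnd (h.symm.trans hfst))).mp d.adj
  exact (adj_z rfl).reachable.trans (adj_z hxy.symm).reachable.symm

theorem connected_induce_of_image_eq {U W : Set V} (hW : (G.induce W).Connected)
    (hnt : (p '' W).Nontrivial) (hWU : p '' W = p '' U) : (G.induce U).Connected := by
  have hUne : U.Nonempty := Set.image_nonempty.mp (hWU ▸ hnt.nonempty)
  have := hUne.to_subtype
  refine ⟨fun x y => ?_⟩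
  have exists_label_eq (x : U) : ∃ a : W, p a = p x := by
    obtain ⟨a, ha, hax⟩ : p x ∈ p '' W := hWU ▸ Set.mem_image_of_mem p x.2
    exact ⟨⟨a, ha⟩, hax⟩
  obtain ⟨a, hax⟩ := exists_label_eq x
  obtain ⟨b, hby⟩ := exists_label_eq y
  have hab := (reachable_iff_reflTransGen a b).mp (hW.preconnected a b)
  induction hab generalizing y with
  | refl => exact reachable_induce_of_label_eq hp hW.preconnected hnt hWU (hax.symm.trans hby)
  | @tail v w _ hvw ih =>
    by_cases hlabel : p v = p w
    · exact ih y (hlabel.trans hby)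
    · obtain ⟨z, hz, hzv⟩ : p v ∈ p '' U := hWU ▸ Set.mem_image_of_mem p v.2
      have hzy : (G.induce U).Adj ⟨z, hz⟩ y :=
        (adj_iff_of_isModule_fiber hp hzv.symm hby hlabel).mp hvw
      exact (ih ⟨z, hz⟩ hzv.symm).trans hzy.reachable

variable {c : ι → V} (hc : Function.RightInverse c p) {S : Set V} (hS : (p '' S).Nontrivial)
include hc hS

theorem IsConnector.image_representatives {W : Set V} (hW : IsConnector G S W) :
    IsConnector G (c '' (p '' S)) (c '' (p '' W)) where
  subset := Set.image_mono (Set.image_mono hW.subset)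
  connected := connected_induce_of_image_eq hp hW.connected (hS.mono (Set.image_mono hW.subset))
    (hc.leftInverse.image_image _).symm

theorem IsConnector.union_sdiff_representatives {U : Set V}
    (hU : IsConnector G (c '' (p '' S)) U) :
    IsConnector G S (S ∪ U \ c '' (p '' S)) where
  subset := Set.subset_union_left
  connected := by
    have hpS : p '' (c '' (p '' S)) = p '' S := hc.leftInverse.image_image _
    refine connected_induce_of_image_eq hp hU.connected
      (hS.mono (hpS ▸ Set.image_mono hU.subset)) ?_
    rw [Set.image_union, ← hpS, ← Set.image_union, hpS, Set.union_sdiff_cancel hU.subset]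

theorem steinerDist_add_ncard_image [Finite V] (hreach : S.Pairwise G.Reachable) :
    steinerDist G S + (p '' S).ncard =
      steinerDist (G.induce (Set.range c)) (Subtype.val ⁻¹' (c '' (p '' S))) + S.ncard := by
  have ncard_image (I : Set ι) : (c '' I).ncard = I.ncard :=
    Set.ncard_image_of_injective I hc.injective
  obtain ⟨W₀, hW₀⟩ := exists_isConnector_of_pairwise_reachable hS.nonempty.of_image hreach
  apply le_antisymm
  · obtain ⟨U, hU, hUcard⟩ :=
      (hW₀.image_representatives hp hc hS).exists_ncard_le_steinerDist_induce
        (Set.image_subset_range c _)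
    have henlarge := (hU.union_sdiff_representatives hp hc hS).steinerDist_lt_ncard (Set.toFinite _)
    have hunion := Set.ncard_union_le S (U \ c '' (p '' S))
    have hsdiff := Set.ncard_sdiff_add_ncard_of_subset hU.subset
    rw [ncard_image] at hsdiff
    lia
  · obtain ⟨W, hW, hWcard⟩ := hW₀.exists_ncard_le
    have hthin := (hW.image_representatives hp hc hS).steinerDist_induce_lt_ncard
      (Set.image_subset_range c _) (Set.toFinite _)
    have hlabels := ncard_image_add_ncard_le (f := p) hW.subset W.toFinite
    rw [ncard_image] at hthin
    lia

end Module

theorem steinerDist_eq_of_meets_two_classes_general {V ι : Type*} [DecidableEq V] [Fintype ι]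
    (G : SimpleGraph V) (C : ι → Finset V) (c : ι → V) (hc : ∀ i, c i ∈ C i)
    (hC : ∀ i, IsModule G (C i)) (hcover : ∀ v, ∃ i, v ∈ C i)
    (hdisj : ∀ i j, i ≠ j → Disjoint (C i) (C j))
    (S : Finset V) (hreach : (S : Set V).Pairwise G.Reachable)
    (hl : 2 ≤ (Finset.univ.filter fun i => (S ∩ C i).Nonempty).card) :
    steinerDist G (S : Set V) =
      steinerDist (G.induce (Set.range c))
          (Subtype.val ⁻¹' (c '' {i | (S ∩ C i).Nonempty})) +
        ∑ i with (S ∩ C i).Nonempty, ((S ∩ C i).card - 1) := by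
  have : Finite V := Set.finite_univ_iff.mp <|
    (Set.finite_iUnion fun i => (C i).finite_toSet).subset fun v _ => Set.mem_iUnion.mpr (hcover v)
  obtain ⟨p, hp⟩ := exists_label_forall_mem_iff hcover hdisj
  have hfiber (i : ι) : p ⁻¹' {i} = C i := by ext v; exact (hp v i).symm
  have hlabels : p '' S = {i | (S ∩ C i).Nonempty} := by
    ext i; simp [Finset.Nonempty, hp]
  have hncard : (p '' S).ncard = (Finset.univ.filter fun i => (S ∩ C i).Nonempty).card := by
    rw [hlabels, ← Set.ncard_coe_finset, Finset.coe_filter_univ]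
  have hmain := steinerDist_add_ncard_image (fun i => hfiber i ▸ hC i) (fun i => (hp _ _).mp (hc i))
    (Set.one_lt_ncard_iff_nontrivial.mp (hncard ▸ hl)) hreach
  have hcount := sum_card_inter_sub_one_add_card hcover hdisj S
  rw [hncard, hlabels, Set.ncard_coe_finset] at hmain
  lia

/-- Let `G` be a finite connected simple graph with twin classes
`C 1, …, C k`, representatives `c i ∈ C i`, and reduced graph `H` (the subgraph induced
by the representatives).  Let `S` be a set of `m` vertices of `G` which meets at least
two twin classes, i.e. `l := |I(S)| > 1` where `I(S) = {i : S ∩ C i ≠ ∅}`.  Then the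
Steiner distance of `S` in `G` equals `d_H(S_r) + Σ_{i ∈ I(S)} (t i − 1)`, where
`S_r = {c i : i ∈ I(S)}`, `t i = |S ∩ C i|`, and `d_H(S_r)` is the Steiner distance of
`S_r` in `H`. -/
theorem steinerDist_eq_of_meets_two_classes {V : Type*} [Fintype V] [DecidableEq V]
    (G : SimpleGraph V) (hG : G.Connected)
    (k : ℕ) (C : Fin k → Finset V) (c : Fin k → V)
    (hC : ∀ i, (C i : Set V) = {v | IsTwin G (c i) v})
    (hcover : ∀ v : V, ∃ i, v ∈ C i)
    (hdisj : ∀ i j, i ≠ j → Disjoint (C i) (C j))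
    (S : Finset V) (m : ℕ) (hcard : S.card = m)
    (hl : 2 ≤ (Finset.univ.filter fun i => (S ∩ C i).Nonempty).card) :
    steinerDist G (S : Set V) =
      steinerDist (G.induce (Set.range c))
          (Subtype.val ⁻¹'
            (((Finset.univ.filter fun i => (S ∩ C i).Nonempty).image c : Finset V) : Set V)) +
        ∑ i ∈ Finset.univ.filter (fun i => (S ∩ C i).Nonempty), ((S ∩ C i).card - 1) := by
  have hmem (i : Fin k) : c i ∈ C i := by rw [← Finset.mem_coe, hC]; exact rfl
  simpa using steinerDist_eq_of_meets_two_classes_general G C c hmem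
    (fun i => hC i ▸ isModule_setOf_isTwin G (c i)) hcover hdisj S (fun u _ v _ _ => hG u v) hl
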